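/- Fix δ ∈ (0,1), C > 0, and ε ∈ (0, δ/2). For all sufficiently large n the following holds. Consider the relaxed adaptive allocation model placing ⌊n/k⌋ balls into n bins, with pool size at most 2^m, m ≥ log n, m ≤ n^{1−δ}, 2 ≤ k ≤ (log n)^C, and all pool distributions having point masses at most k/n. Then with probability at least 1 − e^{−m}, the maximal load after ⌊n/k⌋ rounds is at least (1−ε)·log(n/m) / (log k + log log(n/m)). In particular, when m = n^{1−δ} and k ≤ polylog(n), the maximal load is of order log n / log log n with high probability, the same order as a completely random allocation. -/

import Mathlib

open MeasureTheory Finset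

/-- The load of bin `i` after `t` rounds, when ball `s` is placed in bin `J s ω`. -/
def binLoad {Ω : Type*} {n : ℕ} (J : ℕ → Ω → Fin n) (t : ℕ) (i : Fin n) (ω : Ω) : ℕ :=
  ((Finset.range t).filter fun s => J s ω = i).card

theorem integral_mul_eq_of_condExp_ae_eq {Ω : Type*} {m m₀ : MeasurableSpace Ω} {μ : Measure Ω}
    [IsFiniteMeasure μ] (hm : m ≤ m₀) {f g q : Ω → ℝ} {c : ℝ} (hf : Measurable[m] f)
    (hfc : ∀ ω, |f ω| ≤ c) (hg : Integrable g μ) (hq : μ[g | m] =ᵐ[μ] q) :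
    ∫ ω, f ω * g ω ∂μ = ∫ ω, f ω * q ω ∂μ := by
  have hfs : StronglyMeasurable[m] f := hf.stronglyMeasurable
  have hfg : Integrable (f * g) μ :=
    hg.bdd_mul (hf.mono hm le_rfl).aestronglyMeasurable (Filter.Eventually.of_forall hfc)
  have h := condExp_mul_of_stronglyMeasurable_left hfs hfg hg
  calc ∫ ω, f ω * g ω ∂μ = ∫ ω, (μ[f * g | m]) ω ∂μ := (integral_condExp hm).symm
    _ = ∫ ω, f ω * q ω ∂μ := by
      refine integral_congr_ae ?_
      filter_upwards [h, hq] with ω h1 h2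
      rw [h1, Pi.mul_apply, h2]

theorem exp_neg_le_one_sub_half {x : ℝ} (hx0 : 0 ≤ x) (hx1 : x ≤ 1) :
    Real.exp (-x) ≤ 1 - x / 2 := by
  have h2 : Real.exp (-1) ≤ 1 / 2 := by
    rw [Real.exp_neg, one_div]
    exact inv_anti₀ two_pos (by linarith [Real.add_one_le_exp (1 : ℝ)])
  have h := convexOn_exp.2 (Set.mem_univ (-1)) (Set.mem_univ 0) hx0
    (sub_nonneg.2 hx1) (by ring)
  simp only [smul_eq_mul, mul_neg, mul_one, mul_zero, add_zero, Real.exp_zero] at h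
  nlinarith

/-- The exponential supermartingale comparing the sum of the rewards `Y s (J s)` with half of its
compensator. -/
theorem integral_exp_half_compensator_sub_le_one {Ω : Type*} {mΩ : MeasurableSpace Ω}
    {μ : Measure Ω} [IsProbabilityMeasure μ] {n : ℕ} {ℱ : Filtration ℕ mΩ}
    {Q : ℕ → Ω → Fin n → ℝ} {J : ℕ → Ω → Fin n} (hQ0 : ∀ t ω i, 0 ≤ Q t ω i)
    (hQ1 : ∀ t ω, ∑ i, Q t ω i = 1) (hQm : ∀ t i, Measurable[ℱ t] fun ω => Q t ω i)
    (hJ : ∀ t, Measurable[ℱ (t + 1)] (J t))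
    (hcond : ∀ t i, (μ[(fun ω => if J t ω = i then (1 : ℝ) else 0) | ℱ t])
      =ᵐ[μ] fun ω => Q t ω i)
    {Y : ℕ → Ω → Fin n → ℝ} (hY0 : ∀ t ω i, 0 ≤ Y t ω i) (hY1 : ∀ t ω i, Y t ω i ≤ 1)
    (hYm : ∀ t i, Measurable[ℱ t] fun ω => Y t ω i) (t : ℕ) :
    Measurable[ℱ t] (fun ω => ∑ s ∈ range t, ((∑ i, Q s ω i * Y s ω i) / 2 - Y s ω (J s ω))) ∧
    (∀ ω, ∑ s ∈ range t, ((∑ i, Q s ω i * Y s ω i) / 2 - Y s ω (J s ω)) ≤ t) ∧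
    ∫ ω, Real.exp (∑ s ∈ range t, ((∑ i, Q s ω i * Y s ω i) / 2 - Y s ω (J s ω))) ∂μ ≤ 1 := by
  have hJi : ∀ t i, Measurable[ℱ (t + 1)] fun ω => if J t ω = i then (1 : ℝ) else 0 := by
    intro t i
    exact (measurable_of_countable (fun j : Fin n => if j = i then (1 : ℝ) else 0)).comp (hJ t)
  have hE : ∀ t, Measurable[ℱ t] fun ω => ∑ i, Q t ω i * Y t ω i := fun t =>
    Finset.measurable_fun_sum _ fun i _ => (hQm t i).mul (hYm t i)
  have hsel : ∀ t ω (f : Fin n → ℝ), f (J t ω) = ∑ i, f i * if J t ω = i then (1 : ℝ) else 0 := by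
    intro t ω f
    simp
  have hE1 : ∀ t ω, ∑ i, Q t ω i * Y t ω i ≤ 1 := by
    intro t ω
    rw [← hQ1 t ω]
    exact Finset.sum_le_sum fun i _ => mul_le_of_le_one_right (hQ0 t ω i) (hY1 t ω i)
  induction t with
  | zero => simp
  | succ t ih =>
    obtain ⟨ihm, ihb, ihi⟩ := ih
    have hD : Measurable[ℱ (t + 1)] fun ω => Y t ω (J t ω) := by
      simp_rw [fun ω => hsel t ω (Y t ω)]
      exact Finset.measurable_fun_sum _ fun i _ =>
        ((hYm t i).mono (ℱ.mono t.le_succ) le_rfl).mul (hJi t i)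
    have hmeas : Measurable[ℱ (t + 1)] (fun ω => ∑ s ∈ range (t + 1),
        ((∑ i, Q s ω i * Y s ω i) / 2 - Y s ω (J s ω))) := by
      simp_rw [Finset.sum_range_succ]
      exact (ihm.mono (ℱ.mono t.le_succ) le_rfl).add
        ((((hE t).mono (ℱ.mono t.le_succ) le_rfl).div_const 2).sub hD)
    have hbd : ∀ ω, ∑ s ∈ range (t + 1),
        ((∑ i, Q s ω i * Y s ω i) / 2 - Y s ω (J s ω)) ≤ (t + 1 : ℕ) := by
      intro ω
      rw [Finset.sum_range_succ]
      push_cast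
      linarith [ihb ω, hE1 t ω, hY0 t ω (J t ω)]
    refine ⟨hmeas, hbd, le_trans ?_ ihi⟩
    set W : Ω → ℝ := fun ω =>
      ∑ s ∈ range t, ((∑ i, Q s ω i * Y s ω i) / 2 - Y s ω (J s ω)) with hW
    set E : Ω → ℝ := fun ω => ∑ i, Q t ω i * Y t ω i with hEdef
    set H : Fin n → Ω → ℝ := fun i ω => Real.exp (W ω + E ω / 2) * (1 - Y t ω i / 2) with hH
    have hHm : ∀ i, Measurable[ℱ t] (H i) := fun i =>
      (ihm.add ((hE t).div_const 2)).exp.mul (((hYm t i).div_const 2).const_sub 1)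
    have hHb : ∀ i ω, |H i ω| ≤ Real.exp (t + 1) := by
      intro i ω
      have h0 : 0 ≤ 1 - Y t ω i / 2 := by linarith [hY1 t ω i]
      rw [abs_of_nonneg (mul_nonneg (Real.exp_pos _).le h0)]
      calc H i ω ≤ Real.exp (W ω + E ω / 2) * 1 := by
            refine mul_le_mul_of_nonneg_left ?_ (Real.exp_pos _).le
            linarith [hY0 t ω i]
        _ ≤ Real.exp (t + 1) := by
            rw [mul_one]
            exact Real.exp_le_exp.2 (by linarith [ihb ω, hE1 t ω])
    have hind : ∀ i, Integrable (fun ω => if J t ω = i then (1 : ℝ) else 0) μ := by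
      intro i
      refine Integrable.of_bound (C := 1)
        ((hJi t i).mono (ℱ.le _) le_rfl).aestronglyMeasurable (Filter.Eventually.of_forall ?_)
      intro ω
      split_ifs <;> simp
    have hQi : ∀ i, Integrable (fun ω => Q t ω i) μ := fun i =>
      integrable_condExp.congr (hcond t i)
    have hHf : ∀ i {f : Ω → ℝ}, Integrable f μ → Integrable (fun ω => H i ω * f ω) μ :=
      fun i f hf => hf.bdd_mul ((hHm i).mono (ℱ.le _) le_rfl).aestronglyMeasurable
        (Filter.Eventually.of_forall (hHb i))
    have hexp : ∀ {s : ℕ} {f : Ω → ℝ}, Measurable[ℱ s] f → (∀ ω, f ω ≤ s) →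
        Integrable (fun ω => Real.exp (f ω)) μ := by
      intro s f hf hfs
      refine Integrable.of_bound (C := Real.exp s)
        (hf.mono (ℱ.le _) le_rfl).exp.aestronglyMeasurable (Filter.Eventually.of_forall ?_)
      intro ω
      rw [Real.norm_eq_abs, Real.abs_exp]
      exact Real.exp_le_exp.2 (hfs ω)
    calc ∫ ω, Real.exp (∑ s ∈ range (t + 1),
          ((∑ i, Q s ω i * Y s ω i) / 2 - Y s ω (J s ω))) ∂μ
        ≤ ∫ ω, ∑ i, H i ω * (if J t ω = i then (1 : ℝ) else 0) ∂μ := by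
          refine integral_mono (hexp hmeas hbd) (integrable_finsetSum _ fun i _ => hHf i (hind i)) ?_
          intro ω
          dsimp only
          rw [← hsel t ω (fun i => H i ω), Finset.sum_range_succ, ← add_sub_assoc,
            sub_eq_add_neg, Real.exp_add]
          exact mul_le_mul_of_nonneg_left
            (exp_neg_le_one_sub_half (hY0 _ _ _) (hY1 _ _ _)) (Real.exp_pos _).le
      _ = ∫ ω, ∑ i, H i ω * Q t ω i ∂μ := by
          rw [integral_finsetSum _ fun i _ => hHf i (hind i),
            integral_finsetSum _ fun i _ => hHf i (hQi i)]
          exact Finset.sum_congr rfl fun i _ =>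
            integral_mul_eq_of_condExp_ae_eq (ℱ.le t) (hHm i) (hHb i) (hind i) (hcond t i)
      _ ≤ ∫ ω, Real.exp (W ω) ∂μ := by
          refine integral_mono (integrable_finsetSum _ fun i _ => hHf i (hQi i)) (hexp ihm ihb) ?_
          intro ω
          have hsum : ∑ i, H i ω * Q t ω i = Real.exp (W ω + E ω / 2) * (1 - E ω / 2) := by
            simp only [hH, mul_assoc]
            rw [← Finset.mul_sum]
            congr 1
            simp only [sub_mul, one_mul, Finset.sum_sub_distrib, hQ1, hEdef, Finset.sum_div]
            congr 1
            exact Finset.sum_congr rfl fun i _ => by ring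
          dsimp only
          rw [hsum, Real.exp_add, mul_assoc]
          refine mul_le_of_le_one_right (Real.exp_pos _).le ?_
          calc Real.exp (E ω / 2) * (1 - E ω / 2)
              ≤ Real.exp (E ω / 2) * Real.exp (-(E ω / 2)) :=
                mul_le_mul_of_nonneg_left (Real.one_sub_le_exp_neg _) (Real.exp_pos _).le
            _ = 1 := by rw [← Real.exp_add, add_neg_cancel, Real.exp_zero]

theorem measureReal_rewards_lt_half_compensator_sub_le {Ω : Type*} {mΩ : MeasurableSpace Ω}
    {μ : Measure Ω} [IsProbabilityMeasure μ] {n : ℕ} {ℱ : Filtration ℕ mΩ}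
    {Q : ℕ → Ω → Fin n → ℝ} {J : ℕ → Ω → Fin n} (hQ0 : ∀ t ω i, 0 ≤ Q t ω i)
    (hQ1 : ∀ t ω, ∑ i, Q t ω i = 1) (hQm : ∀ t i, Measurable[ℱ t] fun ω => Q t ω i)
    (hJ : ∀ t, Measurable[ℱ (t + 1)] (J t))
    (hcond : ∀ t i, (μ[(fun ω => if J t ω = i then (1 : ℝ) else 0) | ℱ t])
      =ᵐ[μ] fun ω => Q t ω i)
    {Y : ℕ → Ω → Fin n → ℝ} {b : ℝ} (hb : 0 < b) (hY0 : ∀ t ω i, 0 ≤ Y t ω i)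
    (hYb : ∀ t ω i, Y t ω i ≤ b)
    (hYm : ∀ t i, Measurable[ℱ t] fun ω => Y t ω i) (t : ℕ) (M : ℝ) :
    μ.real {ω | ∑ s ∈ range t, Y s ω (J s ω)
      < (∑ s ∈ range t, ∑ i, Q s ω i * Y s ω i) / 2 - b * M} ≤ Real.exp (-M) := by
  obtain ⟨hm, hbd, hi⟩ := integral_exp_half_compensator_sub_le_one hQ0 hQ1 hQm hJ hcond
    (Y := fun t ω i => Y t ω i / b) (fun t ω i => div_nonneg (hY0 t ω i) hb.le)
    (fun t ω i => (div_le_one hb).2 (hYb t ω i)) (fun t i => (hYm t i).div_const b) t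
  set W : Ω → ℝ := fun ω =>
    ∑ s ∈ range t, ((∑ i, Q s ω i * (Y s ω i / b)) / 2 - Y s ω (J s ω) / b) with hW
  have hWeq : ∀ ω, W ω = ((∑ s ∈ range t, ∑ i, Q s ω i * Y s ω i) / 2
      - ∑ s ∈ range t, Y s ω (J s ω)) / b := by
    intro ω
    rw [sub_div, Finset.sum_div, Finset.sum_div, Finset.sum_div, ← Finset.sum_sub_distrib]
    refine Finset.sum_congr rfl fun s _ => ?_
    rw [Finset.sum_div, Finset.sum_div, Finset.sum_div]
    congr 1
    exact Finset.sum_congr rfl fun i _ => by ring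
  have hint : Integrable (fun ω => Real.exp (W ω)) μ := by
    refine Integrable.of_bound (C := Real.exp t)
      (hm.mono (ℱ.le _) le_rfl).exp.aestronglyMeasurable (Filter.Eventually.of_forall ?_)
    intro ω
    rw [Real.norm_eq_abs, Real.abs_exp]
    exact Real.exp_le_exp.2 (hbd ω)
  have hmarkov := mul_meas_ge_le_integral_of_nonneg
    (Filter.Eventually.of_forall fun ω => (Real.exp_pos (W ω)).le) hint (Real.exp M)
  have hsub : {ω | ∑ s ∈ range t, Y s ω (J s ω)
      < (∑ s ∈ range t, ∑ i, Q s ω i * Y s ω i) / 2 - b * M}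
      ⊆ {ω | Real.exp M ≤ Real.exp (W ω)} := by
    intro ω hω
    simp only [Set.mem_ofPred_eq] at hω ⊢
    rw [Real.exp_le_exp, hWeq, le_div_iff₀ hb]
    linarith
  refine (measureReal_mono hsub).trans ?_
  rw [Real.exp_neg, ← one_div, le_div_iff₀' (Real.exp_pos M)]
  exact hmarkov.trans hi

/-- The `j`-th elementary symmetric polynomial of `a 0, …, a (t - 1)`, split according to the
largest index. -/
def esymmRange (a : ℕ → ℝ) : ℕ → ℕ → ℝ
  | 0, _ => 1
  | j + 1, t => ∑ s ∈ range t, a s * esymmRange a j s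

theorem max_zero_add_pow_succ_sub_le {x a : ℝ} (ha : 0 ≤ a) (j : ℕ) :
    (max 0 (x + a)) ^ (j + 1) - (max 0 x) ^ (j + 1) ≤ (j + 1) * a * (max 0 (x + a)) ^ j := by
  have h0 : 0 ≤ max 0 x := le_max_left _ _
  have h1 : max 0 x ≤ max 0 (x + a) := max_le_max le_rfl (by linarith)
  have h2 : max 0 (x + a) - max 0 x ≤ a := by
    rw [sub_le_iff_le_add]
    exact max_le (by linarith) (by linarith [le_max_right 0 x])
  generalize max 0 x = u at *
  generalize max 0 (x + a) = v at *
  have hv : 0 ≤ v := h0.trans h1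
  induction j with
  | zero => simpa using h2
  | succ j ih =>
    have e : v ^ (j + 1 + 1) - u ^ (j + 1 + 1)
        = v * (v ^ (j + 1) - u ^ (j + 1)) + (v - u) * u ^ (j + 1) := by ring
    have hp : u ^ (j + 1) ≤ v ^ (j + 1) := pow_le_pow_left₀ h0 h1 _
    have h3 : (v - u) * u ^ (j + 1) ≤ a * v ^ (j + 1) :=
      mul_le_mul h2 hp (by positivity) ha
    have h4 := mul_le_mul_of_nonneg_left ih hv
    rw [e]
    push_cast
    calc _ ≤ v * ((j + 1) * a * v ^ j) + a * v ^ (j + 1) := add_le_add h4 h3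
      _ = _ := by ring

theorem max_zero_pow_le_factorial_mul_esymmRange {a : ℕ → ℝ} {β : ℝ} (ha : ∀ s, 0 ≤ a s)
    (haβ : ∀ s, a s ≤ β) (j t : ℕ) :
    (max 0 (∑ s ∈ range t, a s - j * β)) ^ j ≤ j.factorial * esymmRange a j t := by
  have hβ : 0 ≤ β := (ha 0).trans (haβ 0)
  induction j generalizing t with
  | zero => simp [esymmRange]
  | succ j ih =>
    have key : ∀ s, (max 0 (∑ u ∈ range (s + 1), a u - (j + 1 : ℕ) * β)) ^ (j + 1)
        - (max 0 (∑ u ∈ range s, a u - (j + 1 : ℕ) * β)) ^ (j + 1)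
        ≤ (j + 1).factorial * (a s * esymmRange a j s) := by
      intro s
      have h := max_zero_add_pow_succ_sub_le (x := ∑ u ∈ range s, a u - (j + 1 : ℕ) * β) (ha s) j
      rw [show ∑ u ∈ range s, a u - (j + 1 : ℕ) * β + a s
        = ∑ u ∈ range (s + 1), a u - (j + 1 : ℕ) * β by rw [Finset.sum_range_succ]; ring] at h
      refine h.trans ?_
      have hle : (max 0 (∑ u ∈ range (s + 1), a u - (j + 1 : ℕ) * β)) ^ j
          ≤ j.factorial * esymmRange a j s := by
        refine (pow_le_pow_left₀ (le_max_left _ _) (max_le_max le_rfl ?_) j).trans (ih s)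
        rw [Finset.sum_range_succ]
        push_cast
        linarith [haβ s]
      calc _ ≤ (j + 1) * a s * (j.factorial * esymmRange a j s) :=
            mul_le_mul_of_nonneg_left hle (by have := ha s; positivity)
        _ = _ := by rw [Nat.factorial_succ]; push_cast; ring
    have hsum := Finset.sum_le_sum fun s (_ : s ∈ range t) => key s
    rw [Finset.sum_range_sub (fun s => (max 0 (∑ u ∈ range s, a u - (j + 1 : ℕ) * β)) ^ (j + 1)),
      ← Finset.mul_sum] at hsum
    have h0 : max 0 (∑ u ∈ range 0, a u - (j + 1 : ℕ) * β) = 0 := by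
      refine max_eq_left ?_
      rw [Finset.sum_range_zero, zero_sub, neg_nonpos]
      positivity
    rw [h0, zero_pow j.succ_ne_zero, sub_zero] at hsum
    exact hsum

/-- If `T` probability vectors have entries at most `β`, the sum over the coordinates of their
`j`-th elementary symmetric polynomials is bounded below. -/
theorem card_mul_pow_le_factorial_mul_sum_esymmRange {n : ℕ} {q : ℕ → Fin n → ℝ} {β : ℝ}
    (hq0 : ∀ s i, 0 ≤ q s i) (hqβ : ∀ s i, q s i ≤ β) (hq1 : ∀ s, ∑ i, q s i = 1) (j t : ℕ)
    (hpos : 0 ≤ (t : ℝ) / n - j * β) :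
    n * ((t : ℝ) / n - j * β) ^ j
      ≤ j.factorial * ∑ i, esymmRange (fun s => q s i) j t := by
  rcases Nat.eq_zero_or_pos n with rfl | hn
  · simp
  have hn' : (0 : ℝ) < n := Nat.cast_pos.2 hn
  set x : Fin n → ℝ := fun i => max 0 (∑ s ∈ range t, q s i - j * β) with hx
  have hx0 : ∀ i, 0 ≤ x i := fun i => le_max_left _ _
  have havg : (t : ℝ) / n - j * β ≤ (∑ i, x i) / n := by
    rw [le_div_iff₀ hn']
    calc ((t : ℝ) / n - j * β) * n = ∑ i, (∑ s ∈ range t, q s i - j * β) := by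
          rw [Finset.sum_sub_distrib, Finset.sum_comm]
          simp only [hq1, Finset.sum_const, card_range, card_univ, Fintype.card_fin, nsmul_eq_mul]
          field_simp
      _ ≤ ∑ i, x i := Finset.sum_le_sum fun i _ => le_max_right _ _
  have hjensen : ((∑ i, x i) / n) ^ j ≤ (∑ i, x i ^ j) / n := by
    rw [Finset.sum_div, Finset.sum_div]
    simp only [div_eq_inv_mul]
    refine Real.pow_arith_mean_le_arith_mean_pow univ (fun _ => (n : ℝ)⁻¹) x
      (fun _ _ => by positivity) ?_ (fun i _ => hx0 i) j
    simp [hn'.ne']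
  calc n * ((t : ℝ) / n - j * β) ^ j ≤ n * ((∑ i, x i ^ j) / n) :=
        mul_le_mul_of_nonneg_left ((pow_le_pow_left₀ hpos havg j).trans hjensen) hn'.le
    _ = ∑ i, x i ^ j := by field_simp
    _ ≤ ∑ i, j.factorial * esymmRange (fun s => q s i) j t := Finset.sum_le_sum fun i _ =>
        max_zero_pow_le_factorial_mul_esymmRange (fun s => hq0 s i) (fun s => hqβ s i) j t
    _ = _ := by rw [Finset.mul_sum]

theorem binLoad_succ {Ω : Type*} {n : ℕ} (J : ℕ → Ω → Fin n) (t : ℕ) (i : Fin n) (ω : Ω) :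
    binLoad J (t + 1) i ω = binLoad J t i ω + if J t ω = i then 1 else 0 := by
  unfold binLoad
  rw [Finset.range_add_one, Finset.filter_insert]
  split_ifs <;> simp

theorem binLoad_mono {Ω : Type*} {n : ℕ} (J : ℕ → Ω → Fin n) (i : Fin n) (ω : Ω) :
    Monotone fun t => binLoad J t i ω :=
  monotone_nat_of_le_succ fun t => by simp [binLoad_succ]

theorem sum_mul_choose_binLoad_succ {Ω : Type*} {n : ℕ} (J : ℕ → Ω → Fin n) (g : Fin n → ℝ)
    (j t : ℕ) (ω : Ω) :
    ∑ i, g i * (binLoad J t i ω).choose (j + 1)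
      = ∑ s ∈ range t, g (J s ω) * (binLoad J s (J s ω) ω).choose j := by
  induction t with
  | zero => simp [binLoad]
  | succ t ih =>
    rw [Finset.sum_range_succ, ← ih, ← sub_eq_iff_eq_add', ← Finset.sum_sub_distrib]
    rw [Finset.sum_eq_single (J t ω)]
    · rw [binLoad_succ, if_pos rfl, Nat.choose_succ_succ]
      push_cast
      ring
    · intro i _ hi
      rw [binLoad_succ, if_neg (Ne.symm hi), add_zero, sub_self]
    · simp

theorem measurable_binLoad {Ω : Type*} {mΩ : MeasurableSpace Ω} {n : ℕ} {ℱ : Filtration ℕ mΩ}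
    {J : ℕ → Ω → Fin n} (hJ : ∀ t, Measurable[ℱ (t + 1)] (J t)) (t : ℕ) (i : Fin n) :
    Measurable[ℱ t] (binLoad J t i) := by
  induction t with
  | zero =>
    have : binLoad J 0 i = fun _ => 0 := by
      ext ω
      simp [binLoad]
    rw [this]
    exact measurable_const
  | succ t ih =>
    have : binLoad J (t + 1) i = fun ω => binLoad J t i ω + if J t ω = i then 1 else 0 := by
      ext ω
      exact binLoad_succ J t i ω
    rw [this]
    exact (ih.mono (ℱ.mono t.le_succ) le_rfl).add
      ((measurable_of_countable (fun j : Fin n => if j = i then 1 else 0)).comp (hJ t))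

open scoped Pointwise in
theorem nonneg_and_le_pow_of_mem_pow {n : ℕ} {pool : Finset (Fin n → ℝ)} {β : ℝ}
    (h0 : ∀ ν ∈ pool, ∀ i, 0 ≤ ν i) (hβ : ∀ ν ∈ pool, ∀ i, ν i ≤ β) {r : ℕ} {g : Fin n → ℝ}
    (hg : g ∈ pool ^ r) (i : Fin n) : 0 ≤ g i ∧ g i ≤ β ^ r := by
  induction r generalizing g with
  | zero =>
    rw [pow_zero, Finset.mem_one] at hg
    simp [hg]
  | succ r ih =>
    rw [pow_succ, Finset.mem_mul] at hg
    obtain ⟨f, hf, ν, hν, rfl⟩ := hg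
    obtain ⟨hf0, hf1⟩ := ih hf
    refine ⟨mul_nonneg hf0 (h0 ν hν i), ?_⟩
    rw [pow_succ]
    exact mul_le_mul hf1 (hβ ν hν i) (h0 ν hν i) (hf0.trans hf1)

open scoped Pointwise in
/-- If every one-step comparison between rewards and compensators holds up to an error
`β ^ r * B`, then the weighted counts of `j`-subsets of balls sharing a bin are bounded below by
elementary symmetric polynomials of the strategies used. -/
theorem sum_mul_esymmRange_sub_le_sum_mul_choose {Ω : Type*} {n : ℕ} {J : ℕ → Ω → Fin n} {ω : Ω}
    {pool : Finset (Fin n → ℝ)} {q : ℕ → Fin n → ℝ} (hq : ∀ s, q s ∈ pool) {β B : ℝ}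
    (hβ : 0 ≤ β) (hB : 0 ≤ B) {T ℓ : ℕ} (hT : T * β ≤ 1)
    (hgood : ∀ r j, r + j + 1 = ℓ → ∀ g ∈ pool ^ r, ∀ t ≤ T,
      (∑ s ∈ range t, ∑ i, q s i * (g i * (binLoad J s i ω).choose j)) / 2 - β ^ r * B
        ≤ ∑ s ∈ range t, g (J s ω) * (binLoad J s (J s ω) ω).choose j)
    (j r : ℕ) (hr : r + j = ℓ) (g : Fin n → ℝ) (hg : g ∈ pool ^ r) (t : ℕ) (ht : t ≤ T) :
    (1 / 2) ^ j * ∑ i, g i * esymmRange (fun s => q s i) j t - 2 * (β ^ r * B)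
      ≤ ∑ i, g i * (binLoad J t i ω).choose j := by
  induction j generalizing r g t with
  | zero =>
    simp only [esymmRange, Nat.choose_zero_right, Nat.cast_one, mul_one, pow_zero, one_mul]
    have : 0 ≤ β ^ r * B := by positivity
    linarith
  | succ j ih =>
    rw [sum_mul_choose_binLoad_succ]
    refine le_trans ?_ (hgood r j (by omega) g hg t ht)
    have hstep : ∀ s ∈ range t, (1 / 2) ^ j * ∑ i, g i * (q s i * esymmRange (fun s => q s i) j s)
        - 2 * (β ^ (r + 1) * B) ≤ ∑ i, q s i * (g i * (binLoad J s i ω).choose j) := by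
      intro s hs
      have h := ih (r + 1) (by omega) (g * q s)
        (by rw [pow_succ]; exact Finset.mul_mem_mul hg (hq s)) s ((mem_range.1 hs).le.trans ht)
      convert h using 2
      · simp only [Pi.mul_apply, mul_assoc]
      · simp only [Pi.mul_apply]
        ring
    have hsum := Finset.sum_le_sum hstep
    rw [Finset.sum_sub_distrib, ← Finset.mul_sum, Finset.sum_comm] at hsum
    simp only [← Finset.mul_sum, Finset.sum_const, card_range, nsmul_eq_mul] at hsum
    have htβ : t * (β ^ (r + 1) * B) ≤ β ^ r * B := by
      have h1 : (t : ℝ) * β ≤ 1 :=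
        (mul_le_mul_of_nonneg_right (Nat.cast_le.2 ht) hβ).trans hT
      calc t * (β ^ (r + 1) * B) = (t * β) * (β ^ r * B) := by ring
        _ ≤ β ^ r * B := mul_le_of_le_one_left (by positivity) h1
    simp only [esymmRange]
    rw [pow_succ (1 / 2 : ℝ) j]
    linarith

open scoped Pointwise in
theorem one_sub_exp_le_measureReal_exists_le_binLoad {Ω : Type*} {mΩ : MeasurableSpace Ω}
    {μ : Measure Ω} [IsProbabilityMeasure μ] {n : ℕ} {ℱ : Filtration ℕ mΩ}
    {pool : Finset (Fin n → ℝ)} {m : ℕ} (hcard : pool.card ≤ 2 ^ m)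
    (h0 : ∀ ν ∈ pool, ∀ i, 0 ≤ ν i) (h1 : ∀ ν ∈ pool, ∑ i, ν i = 1) {β : ℝ} (hβ0 : 0 < β)
    (hβ : ∀ ν ∈ pool, ∀ i, ν i ≤ β)
    {Q : ℕ → Ω → Fin n → ℝ} {J : ℕ → Ω → Fin n} (hQ : ∀ t ω, Q t ω ∈ pool)
    (hQm : ∀ t i, Measurable[ℱ t] fun ω => Q t ω i) (hJ : ∀ t, Measurable[ℱ (t + 1)] (J t))
    (hcond : ∀ t i, (μ[(fun ω => if J t ω = i then (1 : ℝ) else 0) | ℱ t])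
      =ᵐ[μ] fun ω => Q t ω i)
    {T ℓ : ℕ} (hT : T * β ≤ 1) (hpos : 0 ≤ (T : ℝ) / n - ℓ * β) {M : ℝ} (hM0 : 0 ≤ M)
    (hM : ℓ * (T + 1) * 2 ^ (m * ℓ) * Real.exp (-M) ≤ Real.exp (-m))
    (hmain : ℓ.factorial * (2 * (4 ^ ℓ * M)) < n * ((T : ℝ) / n - ℓ * β) ^ ℓ) :
    1 - Real.exp (-m) ≤ μ.real {ω | ∃ i, ℓ ≤ binLoad J T i ω} := by
  set Y : ℕ → (Fin n → ℝ) → ℕ → Ω → Fin n → ℝ := fun j g s ω i =>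
    g i * (min ((binLoad J s i ω).choose j) (2 ^ ℓ) : ℕ) with hY
  set bad : ℕ → ℕ → (Fin n → ℝ) → Set Ω := fun r t g =>
    {ω | ∑ s ∈ range t, Y (ℓ - 1 - r) g s ω (J s ω)
      < (∑ s ∈ range t, ∑ i, Q s ω i * Y (ℓ - 1 - r) g s ω i) / 2 - β ^ r * 2 ^ ℓ * M} with hbad
  set Bad : Set Ω := ⋃ p ∈ range ℓ ×ˢ range (T + 1), ⋃ g ∈ pool ^ p.1, bad p.1 p.2 g with hBad
  have hbadle : ∀ r t, ∀ g ∈ pool ^ r, μ.real (bad r t g) ≤ Real.exp (-M) := by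
    intro r t g hg
    have hg' := nonneg_and_le_pow_of_mem_pow h0 hβ hg
    refine measureReal_rewards_lt_half_compensator_sub_le (fun t ω => h0 _ (hQ t ω))
      (fun t ω => h1 _ (hQ t ω)) hQm hJ hcond (Y := Y (ℓ - 1 - r) g) (b := β ^ r * 2 ^ ℓ)
      (by positivity) (fun s ω i => mul_nonneg (hg' i).1 (Nat.cast_nonneg _)) ?_ ?_ t M
    · intro s ω i
      refine mul_le_mul (hg' i).2 ?_ (Nat.cast_nonneg _) (by positivity)
      exact_mod_cast min_le_right _ _
    · intro s i
      exact ((measurable_of_countable fun N : ℕ =>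
        g i * ((min (N.choose (ℓ - 1 - r)) (2 ^ ℓ) : ℕ) : ℝ))).comp (measurable_binLoad hJ s i)
  have hBadle : μ.real Bad ≤ Real.exp (-m) := by
    have hp : ∀ p ∈ range ℓ ×ˢ range (T + 1), μ.real (⋃ g ∈ pool ^ p.1, bad p.1 p.2 g)
        ≤ 2 ^ (m * ℓ) * Real.exp (-M) := by
      intro p hp
      refine (measureReal_biUnion_finset_le _ _).trans ((Finset.sum_le_card_nsmul _ _ _
        fun g hg => hbadle p.1 p.2 g hg).trans ?_)
      rw [nsmul_eq_mul]
      refine mul_le_mul_of_nonneg_right ?_ (Real.exp_pos _).le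
      have hle : (pool ^ p.1).card ≤ 2 ^ (m * ℓ) :=
        calc (pool ^ p.1).card ≤ pool.card ^ p.1 := Finset.card_pow_le
          _ ≤ (2 ^ m) ^ p.1 := Nat.pow_le_pow_left hcard _
          _ = 2 ^ (m * p.1) := (pow_mul _ _ _).symm
          _ ≤ 2 ^ (m * ℓ) := Nat.pow_le_pow_right two_pos
            (Nat.mul_le_mul_left _ (mem_range.1 (mem_product.1 hp).1).le)
      exact_mod_cast hle
    refine (measureReal_biUnion_finset_le _ _).trans
      ((Finset.sum_le_card_nsmul _ _ _ hp).trans (le_trans (le_of_eq ?_) hM))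
    rw [nsmul_eq_mul, card_product, card_range, card_range]
    push_cast
    ring
  have hsub : Badᶜ ⊆ {ω | ∃ i, ℓ ≤ binLoad J T i ω} := by
    intro ω hω
    by_contra hcon
    simp only [Set.mem_ofPred_eq, not_exists, not_le] at hcon
    have hmin : ∀ j s i, s ≤ T →
        min ((binLoad J s i ω).choose j) (2 ^ ℓ) = (binLoad J s i ω).choose j := by
      intro j s i hs
      refine min_eq_left ((Nat.choose_le_two_pow _ _).trans
        (Nat.pow_le_pow_right two_pos ((binLoad_mono J i ω hs).trans (hcon i).le)))
    have hgood : ∀ r j, r + j + 1 = ℓ → ∀ g ∈ pool ^ r, ∀ t ≤ T,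
        (∑ s ∈ range t, ∑ i, Q s ω i * (g i * (binLoad J s i ω).choose j)) / 2
          - β ^ r * (2 ^ ℓ * M)
          ≤ ∑ s ∈ range t, g (J s ω) * (binLoad J s (J s ω) ω).choose j := by
      intro r j hrj g hg t ht
      have hnot : ω ∉ bad r t g := fun hmem => hω <| by
        simp only [hBad, Set.mem_iUnion]
        exact ⟨(r, t), mem_product.2 ⟨mem_range.2 (by dsimp only; omega),
          mem_range.2 (by dsimp only; omega)⟩, g, hg, hmem⟩
      simp only [hbad, hY, Set.mem_ofPred_eq, not_lt, show ℓ - 1 - r = j by omega] at hnot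
      rw [← mul_assoc]
      refine (le_of_eq ?_).trans (hnot.trans (le_of_eq ?_))
      · congr 2
        refine Finset.sum_congr rfl fun s hs => Finset.sum_congr rfl fun i _ => ?_
        rw [hmin j s i ((mem_range.1 hs).le.trans ht)]
      · refine Finset.sum_congr rfl fun s hs => ?_
        rw [hmin j _ _ ((mem_range.1 hs).le.trans ht)]
    have h := sum_mul_esymmRange_sub_le_sum_mul_choose (q := fun s => Q s ω) (fun s => hQ s ω)
      hβ0.le (by positivity) hT hgood ℓ 0 (zero_add _) 1 (by simp) T le_rfl
    have hzero : ∑ i, (1 : Fin n → ℝ) i * ((binLoad J T i ω).choose ℓ : ℝ) = 0 :=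
      Finset.sum_eq_zero fun i _ => by rw [Nat.choose_eq_zero_of_lt (hcon i)]; simp
    rw [hzero] at h
    simp only [Pi.one_apply, one_mul, pow_zero] at h
    have he := card_mul_pow_le_factorial_mul_sum_esymmRange (fun s => h0 _ (hQ s ω))
      (fun s => hβ _ (hQ s ω)) (fun s => h1 _ (hQ s ω)) ℓ T hpos
    have hfac : (0 : ℝ) < ℓ.factorial := Nat.cast_pos.2 ℓ.factorial_pos
    have hlt := lt_of_mul_lt_mul_left (hmain.trans_le he) hfac.le
    have h2 : (1 / 2 : ℝ) ^ ℓ * (2 * (4 ^ ℓ * M)) = 2 * (2 ^ ℓ * M) := by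
      rw [show (4 : ℝ) = 2 * 2 by norm_num, mul_pow, one_div, inv_pow]
      field_simp
    have := mul_lt_mul_of_pos_left hlt (by positivity : (0 : ℝ) < (1 / 2) ^ ℓ)
    linarith
  have hc : 1 ≤ μ.real Bad + μ.real Badᶜ := by
    rw [← probReal_univ (μ := μ), ← Set.union_compl_self Bad]
    exact measureReal_union_le _ _
  linarith [measureReal_mono (μ := μ) hsub]

theorem one_sub_exp_le_measureReal_exists_le_binLoad_div {Ω : Type*} {mΩ : MeasurableSpace Ω}
    {μ : Measure Ω} [IsProbabilityMeasure μ] {n k m ℓ : ℕ} {ℱ : Filtration ℕ mΩ}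
    {pool : Finset (Fin n → ℝ)} (hcard : pool.card ≤ 2 ^ m)
    (h0 : ∀ ν ∈ pool, ∀ i, 0 ≤ ν i) (h1 : ∀ ν ∈ pool, ∑ i, ν i = 1)
    (hβ : ∀ ν ∈ pool, ∀ i, ν i ≤ (k : ℝ) / n)
    {Q : ℕ → Ω → Fin n → ℝ} {J : ℕ → Ω → Fin n} (hQ : ∀ t ω, Q t ω ∈ pool)
    (hQm : ∀ t i, Measurable[ℱ t] fun ω => Q t ω i) (hJ : ∀ t, Measurable[ℱ (t + 1)] (J t))
    (hcond : ∀ t i, (μ[(fun ω => if J t ω = i then (1 : ℝ) else 0) | ℱ t])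
      =ᵐ[μ] fun ω => Q t ω i)
    (hk : 2 ≤ k) (hℓ : 1 ≤ ℓ) (hℓm : ℓ ≤ m) (hnm : Real.log n ≤ m)
    (hn : 4 * ℓ * (k : ℝ) ^ 2 ≤ n) (hmain : 8 * m * ℓ * (8 * k * ℓ : ℝ) ^ ℓ < n) :
    1 - Real.exp (-m) ≤ μ.real {ω | ∃ i, ℓ ≤ binLoad J (n / k) i ω} := by
  have hk' : (2 : ℝ) ≤ k := by exact_mod_cast hk
  have hℓ' : (1 : ℝ) ≤ ℓ := by exact_mod_cast hℓ
  have hk0 : (0 : ℝ) < k := by linarith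
  have hℓ0 : (0 : ℝ) < ℓ := by linarith
  have hn0 : (0 : ℝ) < n := lt_of_lt_of_le (by positivity) hn
  have hn1 : 1 ≤ n := Nat.cast_pos.1 hn0
  have hnexp : (n : ℝ) ≤ Real.exp m := by
    rw [← Real.log_le_iff_le_exp hn0]
    exact hnm
  have hT : ((n / k : ℕ) : ℝ) * (k / n) ≤ 1 := by
    rw [mul_div_assoc', div_le_one hn0]
    exact_mod_cast Nat.div_mul_le_self n k
  have hTlow : 1 / (2 * k : ℝ) ≤ ((n / k : ℕ) : ℝ) / n - ℓ * (k / n) := by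
    have h : (n : ℝ) ≤ ((n / k : ℕ) + 1) * k := by
      have := Nat.lt_div_mul_add (a := n) (b := k) (by omega)
      have h2 : n ≤ (n / k + 1) * k := by linarith
      exact_mod_cast h2
    rw [mul_div_assoc', ← sub_div, div_le_div_iff₀ (by positivity) hn0]
    nlinarith [mul_le_mul_of_nonneg_right hℓ' (sq_nonneg (k : ℝ))]
  have hTn : ((n / k : ℕ) : ℝ) + 1 ≤ n := by
    have : n / k < n := Nat.div_lt_self hn1 hk
    exact_mod_cast this
  refine one_sub_exp_le_measureReal_exists_le_binLoad hcard h0 h1 (div_pos hk0 hn0) hβ hQ hQm hJ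
    hcond hT (le_trans (by positivity) hTlow) (M := 4 * m * ℓ) (by positivity) ?_ ?_
  · have hm1 : (ℓ : ℝ) ≤ Real.exp m :=
      (Nat.cast_le.2 hℓm).trans (by linarith [Real.add_one_le_exp (m : ℝ)])
    have h2 : (2 : ℝ) ^ (m * ℓ) ≤ Real.exp (m * ℓ) := by
      have := pow_le_pow_left₀ two_pos.le
        (by linarith [Real.add_one_le_exp (1 : ℝ)] : (2 : ℝ) ≤ Real.exp 1) (m * ℓ)
      rwa [← Real.exp_nat_mul, mul_one, Nat.cast_mul] at this
    calc _ ≤ Real.exp m * Real.exp m * Real.exp (m * ℓ) * Real.exp (-(4 * m * ℓ)) := by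
          gcongr
          exact hTn.trans hnexp
      _ = Real.exp (m + m + m * ℓ + -(4 * m * ℓ)) := by simp only [Real.exp_add]
      _ ≤ Real.exp (-m) := by
          refine Real.exp_le_exp.2 ?_
          nlinarith [mul_le_mul_of_nonneg_left hℓ' (Nat.cast_nonneg (α := ℝ) m)]
  · have hfac : (ℓ.factorial : ℝ) ≤ (ℓ : ℝ) ^ ℓ := by exact_mod_cast Nat.factorial_le_pow ℓ
    calc (ℓ.factorial : ℝ) * (2 * (4 ^ ℓ * (4 * m * ℓ)))
        ≤ (ℓ : ℝ) ^ ℓ * (2 * (4 ^ ℓ * (4 * m * ℓ))) :=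
          mul_le_mul_of_nonneg_right hfac (by positivity)
      _ = 8 * m * ℓ * (8 * k * ℓ : ℝ) ^ ℓ * (1 / (2 * k)) ^ ℓ := by
          rw [show (8 * k * ℓ : ℝ) = ℓ * (4 * (2 * k)) by ring, mul_pow, mul_pow (4 : ℝ), one_div,
            inv_pow]
          field_simp
          ring
      _ < n * (1 / (2 * k)) ^ ℓ := mul_lt_mul_of_pos_right hmain (by positivity)
      _ ≤ _ := by gcongr

theorem eventually_polylog_lt_exp {δ C ε : ℝ} (hδ0 : 0 < δ) (hε0 : 0 < ε) :
    ∀ᶠ L : ℝ in Filter.atTop, 16 ≤ L ∧ 16 ≤ Real.log L ∧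
      (L / δ) ^ C * L ^ 2 < Real.exp (ε * L) ∧ L * ((L / δ) ^ C) ^ 2 ≤ Real.exp L := by
  have hδC : 0 < δ ^ C := Real.rpow_pos_of_pos hδ0 C
  have h1 := (isLittleO_rpow_exp_pos_mul_atTop (C + 2) hε0).bound (half_pos hδC)
  have h2 := (isLittleO_rpow_exp_pos_mul_atTop (C + C + 1) one_pos).bound (pow_pos hδC 2)
  filter_upwards [Filter.eventually_ge_atTop 16, Real.tendsto_log_atTop.eventually_ge_atTop 16,
    h1, h2] with L hL hlog h1 h2
  have hL0 : 0 < L := by linarith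
  rw [Real.norm_of_nonneg (Real.rpow_nonneg hL0.le _), Real.norm_of_nonneg (Real.exp_pos _).le]
    at h1 h2
  rw [Real.rpow_add hL0, Real.rpow_two] at h1
  rw [Real.rpow_add hL0, Real.rpow_add hL0, Real.rpow_one, one_mul] at h2
  refine ⟨hL, hlog, ?_, ?_⟩
  · rw [Real.div_rpow hL0.le hδ0.le, div_mul_eq_mul_div, div_lt_iff₀ hδC]
    nlinarith [mul_pos hδC (Real.exp_pos (ε * L))]
  · rw [Real.div_rpow hL0.le hδ0.le, div_pow, mul_div_assoc', div_le_iff₀ (pow_pos hδC 2)]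
    linarith

/-- Theorem 2 of the paper: fix `δ ∈ (0,1)`, `C > 0` and `ε ∈ (0, δ/2)`. For all large `n`,
in the relaxed adaptive allocation model placing `⌊n/k⌋` balls into `n` bins with pool of
at most `2^m` strategies (point masses at most `k/n`), `log n ≤ m ≤ n^{1-δ}` and
`2 ≤ k ≤ (log n)^C`, with probability at least `1 - e^{-m}` the maximal load after `⌊n/k⌋`
rounds is at least `(1-ε) log(n/m) / (log k + log log (n/m))`. -/
theorem load_lower_bound_polylog
    (δ C ε : ℝ) (hδ0 : 0 < δ) (hδ1 : δ < 1) (hC : 0 < C)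
    (hε0 : 0 < ε) (hε1 : ε < δ / 2) :
    ∃ n₀ : ℕ, ∀ n : ℕ, n₀ ≤ n → ∀ k m : ℕ,
      Real.log n ≤ m → (m : ℝ) ≤ (n : ℝ) ^ (1 - δ) →
      2 ≤ k → (k : ℝ) ≤ (Real.log n) ^ C →
    ∀ (Ω : Type) (_ : MeasurableSpace Ω) (μ : Measure Ω), IsProbabilityMeasure μ →
    ∀ (ℱ : Filtration ℕ ‹MeasurableSpace Ω›)
      (pool : Finset (Fin n → ℝ)), pool.card ≤ 2 ^ m →
      (∀ ν ∈ pool, ∀ i, 0 ≤ ν i) →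
      (∀ ν ∈ pool, ∑ i, ν i = 1) →
      (∀ ν ∈ pool, ∀ i, ν i ≤ (k : ℝ) / n) →
    ∀ (Q : ℕ → Ω → Fin n → ℝ) (J : ℕ → Ω → Fin n),
      (∀ t ω, Q t ω ∈ pool) →
      (∀ t i, Measurable[ℱ t] fun ω => Q t ω i) →
      (∀ t, Measurable[ℱ (t + 1)] (J t)) →
      (∀ t i, (μ[(fun ω => if J t ω = i then (1 : ℝ) else 0) | ℱ t])
          =ᵐ[μ] fun ω => Q t ω i) →
      1 - Real.exp (-(m : ℝ))
        ≤ (μ {ω | ∃ i, (1 - ε) * Real.log ((n : ℝ) / m)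
              / (Real.log k + Real.log (Real.log ((n : ℝ) / m)))
            ≤ (binLoad J (n / k) i ω : ℝ)}).toReal := by
  obtain ⟨L₀, hL₀⟩ := Filter.eventually_atTop.1 (eventually_polylog_lt_exp (C := C) hδ0 hε0)
  obtain ⟨n₀, hn₀⟩ := Filter.eventually_atTop.1
    ((Real.tendsto_log_atTop.comp tendsto_natCast_atTop_atTop).eventually_ge_atTop
      (max 1 (L₀ / δ)))
  refine ⟨n₀, fun n hn k m hnm hmn hk hkC Ω _ μ _ ℱ pool hcard h0 h1 hβ Q J hQ hQm hJ hcond => ?_⟩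
  have hlogn := hn₀ n hn
  simp only [Function.comp_apply, max_le_iff, div_le_iff₀' hδ0] at hlogn
  obtain ⟨hlog1, hlogL⟩ := hlogn
  have hm1 : (1 : ℝ) ≤ m := hlog1.trans hnm
  have hm0 : (0 : ℝ) < m := by linarith
  have hn0 : (0 : ℝ) < n := by
    rcases Nat.eq_zero_or_pos n with rfl | h
    · norm_num at hlog1
    · exact_mod_cast h
  have hk2 : (2 : ℝ) ≤ k := by exact_mod_cast hk
  have hk0 : (0 : ℝ) < k := by linarith
  set L := Real.log ((n : ℝ) / m) with hL
  have hLeq : L = Real.log n - Real.log m := Real.log_div hn0.ne' hm0.ne'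
  have hlogm : Real.log m ≤ (1 - δ) * Real.log n := by
    rw [← Real.log_rpow hn0]
    exact Real.log_le_log hm0 hmn
  have hδL : δ * Real.log n ≤ L := by linarith
  have hLn : L ≤ Real.log n := by linarith [Real.log_nonneg hm1]
  obtain ⟨hL16, hlogL16, hexp1, hexp2⟩ := hL₀ L (hlogL.trans hδL)
  have hL0 : 0 < L := by linarith
  have hkL : (k : ℝ) ≤ (L / δ) ^ C :=
    hkC.trans (Real.rpow_le_rpow (by linarith) ((le_div_iff₀' hδ0).2 hδL) hC.le)
  have hlogk : 0 ≤ Real.log k := Real.log_nonneg (by linarith)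
  have hden : 16 ≤ Real.log k + Real.log L := by linarith
  set x := (1 - ε) * L / (Real.log k + Real.log L) with hx
  have hx0 : 0 < x := div_pos (mul_pos (by linarith) hL0) (by linarith)
  have hx16 : x ≤ L / 16 :=
    div_le_div₀ hL0.le (by nlinarith) (by norm_num) hden
  have hceil : (⌈x⌉₊ : ℝ) < x + 1 := Nat.ceil_lt_add_one hx0.le
  have hℓ1 : 1 ≤ ⌈x⌉₊ := Nat.one_le_ceil_iff.2 hx0
  have hle : x ≤ ⌈x⌉₊ := Nat.le_ceil x
  generalize ⌈x⌉₊ = ℓ at hceil hℓ1 hle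
  have hℓL : 8 * (ℓ : ℝ) ≤ L := by linarith
  have hnL : (n : ℝ) = m * Real.exp L := by
    rw [hL, Real.exp_log (div_pos hn0 hm0)]
    field_simp
  have hℓm : ℓ ≤ m := by
    have : (ℓ : ℝ) ≤ m := by linarith
    exact_mod_cast this
  have hnbig : 4 * ℓ * (k : ℝ) ^ 2 ≤ n :=
    calc 4 * ℓ * (k : ℝ) ^ 2 ≤ L * ((L / δ) ^ C) ^ 2 := by gcongr; linarith
      _ ≤ 1 * Real.exp L := by rwa [one_mul]
      _ ≤ n := by rw [hnL]; gcongr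
  have hpow : (8 * k * ℓ : ℝ) ^ ℓ ≤ Real.exp ((1 - ε) * L) * (k * L) := by
    have hkL1 : (1 : ℝ) ≤ k * L := by nlinarith
    calc (8 * k * ℓ : ℝ) ^ ℓ ≤ (k * L) ^ ℓ := by
          refine pow_le_pow_left₀ (by positivity) ?_ ℓ
          calc 8 * k * ℓ = k * (8 * ℓ : ℝ) := by ring
            _ ≤ k * L := by gcongr
      _ = (k * L) ^ (ℓ : ℝ) := (Real.rpow_natCast _ _).symm
      _ ≤ (k * L) ^ (x + 1) := Real.rpow_le_rpow_of_exponent_le hkL1 hceil.le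
      _ = (k * L) ^ x * (k * L) := Real.rpow_add_one (by positivity) x
      _ = Real.exp ((1 - ε) * L) * (k * L) := by
          rw [Real.rpow_def_of_pos (by positivity), Real.log_mul hk0.ne' hL0.ne', hx,
            mul_div_cancel₀ _ (by linarith)]
  have hmain : 8 * m * ℓ * (8 * k * ℓ : ℝ) ^ ℓ < n :=
    calc 8 * m * ℓ * (8 * k * ℓ : ℝ) ^ ℓ
        = m * (8 * ℓ) * (8 * k * ℓ : ℝ) ^ ℓ := by ring
      _ ≤ m * L * (Real.exp ((1 - ε) * L) * ((L / δ) ^ C * L)) := by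
          refine mul_le_mul (by gcongr) (hpow.trans (by gcongr)) (by positivity) (by positivity)
      _ = m * (Real.exp ((1 - ε) * L) * ((L / δ) ^ C * L ^ 2)) := by ring
      _ < m * (Real.exp ((1 - ε) * L) * Real.exp (ε * L)) := by gcongr
      _ = n := by rw [hnL, ← Real.exp_add]; ring_nf
  refine (one_sub_exp_le_measureReal_exists_le_binLoad_div hcard h0 h1 hβ hQ hQm hJ hcond hk hℓ1
    hℓm hnm hnbig hmain).trans (measureReal_mono ?_)
  rintro ω ⟨i, hi⟩
  exact ⟨i, hle.trans (Nat.cast_le.2 hi)⟩
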